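/- Consider a single unicast index coding problem with n users: message index set [n], user k demands W_k = {k} and knows K_k ⊆ [n] \ {k}. Let G be its side-information digraph: vertex set [n] with an arc from k to j if and only if j ∈ K_k. If S ⊆ [n] is such that the subgraph of G induced on S contains no directed cycle, then every valid index code of length ℓ for message length t satisfies ℓ ≥ |S|·t; consequently the optimal broadcast rate R* satisfies R* ≥ MAIS(G), the maximum size of a subset of [n] inducing an acyclic subgraph of G. -/

import Mathlib

open Finset

/-- Users (= message indices) of a single unicast ICP with `n` users: `[n]`. -/
abbrev Usr (n : ℕ) : Type := {k : ℕ // k ∈ Finset.Icc 1 n}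

/-- A valid index code of length `ℓ` for message length `t`. -/
def ValidCode {I U : Type} (W Kn : U → Set I) (t ℓ : ℕ) : Prop :=
  ∃ E : (I → Fin t → Bool) → Fin ℓ → Bool,
  ∃ D : ∀ u : U, (Fin ℓ → Bool) → (↥(Kn u) → Fin t → Bool) → (↥(W u) → Fin t → Bool),
    ∀ x : I → Fin t → Bool, ∀ u : U,
      D u (E x) (fun m => x m.1) = fun m => x m.1

/-- The optimal broadcast rate of an index coding problem. -/
noncomputable def optRate {I U : Type} (W Kn : U → Set I) : ℝ :=
  sInf {ρ : ℝ | ∃ t ℓ : ℕ, 1 ≤ t ∧ ValidCode W Kn t ℓ ∧ ρ = (ℓ : ℝ) / (t : ℝ)}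

/-- Want sets of a single unicast ICP with `n` users: user `k` demands message `k`. -/
def suicpW (n : ℕ) : Usr n → Set (Usr n) := fun u => {x | x.1 = u.1}

/-- Known sets of a single unicast ICP with `n` users, induced by `Kn : ℕ → Set ℕ`. -/
def suicpK (n : ℕ) (Kn : ℕ → Set ℕ) : Usr n → Set (Usr n) := fun u => {x | x.1 ∈ Kn u.1}

/-!
Restrict to message realizations that vanish outside the acyclic set `S`. If two of them have the
same codeword, they agree everywhere: walking up the digraph from its sinks, each user of `S` has
the same side information in both, hence decodes the same message. So the encoder is injective on
these `2 ^ (|S| t)` realizations, while there are only `2 ^ ℓ` codewords.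
-/

/-- Acyclicity of a digraph: it has no closed walk of positive length. A walk of length `m` is
encoded by the first `m + 1` values of a sequence of vertices. -/
def DigraphAcyclic {V : Type*} (G : Digraph V) : Prop :=
  ∀ (m : ℕ) (f : ℕ → V), 0 < m → (∀ j < m, G.Adj (f j) (f (j + 1))) → f m ≠ f 0

theorem DigraphAcyclic.wellFounded_flip_adj {V : Type*} [Finite V] {G : Digraph V}
    (hG : DigraphAcyclic G) : WellFounded (flip G.Adj) := by
  rw [wellFounded_iff_isEmpty_descending_chain, isEmpty_subtype]
  intro f hf
  obtain ⟨i, j, hij, hfij⟩ := Finite.exists_ne_map_eq_of_infinite f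
  wlog hlt : i < j generalizing i j
  · exact this j i hij.symm hfij.symm (by omega)
  refine hG (j - i) (fun k => f (i + k)) (by omega) (fun k _ => hf (i + k)) ?_
  simp only [Nat.add_sub_cancel' hlt.le, Nat.add_zero, hfij]

section IndexCoding

variable {I U : Type} {W Kn : U → Set I}

/-- An encoding map `E` is decodable if every user's demanded messages are determined by the
codeword and the user's side information; this is what the existence of decoding maps amounts to,
for messages in an arbitrary alphabet `M` and codewords in an arbitrary type `C`. -/
def IsDecodable {M C : Type*} (W Kn : U → Set I) (E : (I → M) → C) : Prop :=
  ∀ ⦃x y : I → M⦄, E x = E y → ∀ u, Set.EqOn x y (Kn u) → Set.EqOn x y (W u)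

theorem ValidCode.exists_isDecodable {t ℓ : ℕ} (h : ValidCode W Kn t ℓ) :
    ∃ E : (I → Fin t → Bool) → Fin ℓ → Bool, IsDecodable W Kn E := by
  obtain ⟨E, D, hD⟩ := h
  refine ⟨E, fun x y hE u hK m hm => ?_⟩
  have hside : (fun j : Kn u => x j) = fun j : Kn u => y j := funext fun j => hK j.2
  have hdec : (fun j : W u => x j) = fun j : W u => y j := by
    rw [← hD x u, ← hD y u, hE, hside]
  exact congrFun hdec ⟨m, hm⟩

theorem validCode_uncoded [Finite I] (W Kn : U → Set I) (t : ℕ) :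
    ValidCode W Kn t (Nat.card I * t) := by
  let e : I × Fin t ≃ Fin (Nat.card I * t) :=
    ((Finite.equivFin I).prodCongr (Equiv.refl _)).trans finProdFinEquiv
  refine ⟨fun x c => Function.uncurry x (e.symm c), fun u c _ m r => c (e (m, r)), fun x u => ?_⟩
  simp only [Equiv.symm_apply_apply, Function.uncurry_apply_pair]

theorem le_optRate [Finite I] {ρ : ℝ}
    (h : ∀ t ℓ : ℕ, 1 ≤ t → ValidCode W Kn t ℓ → ρ * t ≤ ℓ) : ρ ≤ optRate W Kn := by
  refine le_csInf ⟨_, 1, _, le_rfl, validCode_uncoded W Kn 1, rfl⟩ ?_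
  rintro _ ⟨t, ℓ, ht, hcode, rfl⟩
  exact (le_div_iff₀ (Nat.cast_pos.mpr ht)).mpr (h t ℓ ht hcode)

variable {ι : Type*} {s : ι → I} {v : ι → U}

/-- The side-information digraph of a family of demands, in which user `v i` demands message `s i`:
there is an arc from `i` to `j` if user `v i` knows message `s j`. The family need not contain all
demands, and for a single unicast problem it gives the induced subgraphs of the usual digraph. -/
def sideInfoDigraph (Kn : U → Set I) (s : ι → I) (v : ι → U) : Digraph ι where
  Adj i j := s j ∈ Kn (v i)

theorem IsDecodable.eq_of_encode_eq {M C : Type*} {E : (I → M) → C} (hE : IsDecodable W Kn E)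
    (hsv : ∀ i, s i ∈ W (v i)) (hwf : WellFounded (flip (sideInfoDigraph Kn s v).Adj))
    {x y : I → M} (hxy : E x = E y) (hoff : Set.EqOn x y (Set.range s)ᶜ) : x = y := by
  have hon : ∀ i, x (s i) = y (s i) := by
    intro i
    induction i using hwf.induction with
    | _ i ih =>
      refine hE hxy (v i) (fun m hm => ?_) (hsv i)
      by_cases hms : m ∈ Set.range s
      · obtain ⟨j, rfl⟩ := hms
        exact ih j hm
      · exact hoff hms
  rw [← Set.eqOn_univ, ← Set.union_compl_self (Set.range s)]
  exact (Set.eqOn_range.mpr (funext hon)).union hoff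

theorem IsDecodable.injective_comp_extend {M C : Type*} {E : (I → M) → C} (hE : IsDecodable W Kn E)
    (hs : Function.Injective s) (hsv : ∀ i, s i ∈ W (v i))
    (hwf : WellFounded (flip (sideInfoDigraph Kn s v).Adj)) (x₀ : I → M) :
    Function.Injective fun z : ι → M => E (Function.extend s z x₀) := by
  intro z z' hzz'
  refine Function.extend_injective hs x₀ (hE.eq_of_encode_eq hsv hwf hzz' fun m hm => ?_)
  exact (Function.extend_apply' z x₀ m hm).trans (Function.extend_apply' z' x₀ m hm).symm

theorem ValidCode.card_mul_le [Finite ι] {t ℓ : ℕ} (h : ValidCode W Kn t ℓ)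
    (hs : Function.Injective s) (hsv : ∀ i, s i ∈ W (v i))
    (hacyc : DigraphAcyclic (sideInfoDigraph Kn s v)) : Nat.card ι * t ≤ ℓ := by
  obtain ⟨E, hE⟩ := h.exists_isDecodable
  have hcard := Nat.card_le_card_of_injective _
    (hE.injective_comp_extend hs hsv hacyc.wellFounded_flip_adj fun _ _ => false)
  simp only [Nat.card_fun, Nat.card_fin, Nat.card_eq_fintype_card (α := Bool), Fintype.card_bool,
    ← pow_mul] at hcard
  rw [mul_comm]
  exact (Nat.pow_le_pow_iff_right one_lt_two).mp hcard

theorem stmt19_general [Finite I] [Finite ι] (hs : Function.Injective s)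
    (hsv : ∀ i, s i ∈ W (v i)) (hacyc : DigraphAcyclic (sideInfoDigraph Kn s v)) :
    (∀ t ℓ : ℕ, ValidCode W Kn t ℓ → Nat.card ι * t ≤ ℓ) ∧ (Nat.card ι : ℝ) ≤ optRate W Kn :=
  ⟨fun _ _ hcode => hcode.card_mul_le hs hsv hacyc,
    le_optRate fun _ _ _ hcode => mod_cast hcode.card_mul_le hs hsv hacyc⟩

end IndexCoding

/-- Lemma 7 of the paper, maximum acyclic induced subgraph lower
bound: for a single unicast ICP with `n` users and any set `S ⊆ [n]` inducing an
acyclic subgraph of the side-information digraph (arc `k → j` iff `j ∈ K_k`),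
every valid index code of length `ℓ` for message length `t` has `ℓ ≥ |S|·t`;
consequently the optimal broadcast rate satisfies `R* ≥ |S|`. -/
theorem stmt19 (n : ℕ) (Kn : ℕ → Set ℕ)
    (hKn : ∀ k ∈ Finset.Icc 1 n, Kn k ⊆ {j | j ∈ Finset.Icc 1 n ∧ j ≠ k})
    (S : Finset ℕ) (hS : S ⊆ Finset.Icc 1 n)
    (hacyc : ¬ ∃ (m : ℕ) (f : ℕ → ℕ), 0 < m ∧ (∀ j ≤ m, f j ∈ S) ∧
        (∀ j < m, f (j + 1) ∈ Kn (f j)) ∧ f m = f 0) :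
    (∀ t ℓ : ℕ, 1 ≤ t → ValidCode (suicpW n) (suicpK n Kn) t ℓ → S.card * t ≤ ℓ) ∧
    (S.card : ℝ) ≤ optRate (suicpW n) (suicpK n Kn) := by
  have key := stmt19_general (W := suicpW n) (Kn := suicpK n Kn) (Set.inclusion_injective hS)
    (v := Set.inclusion hS) (fun _ => rfl)
    fun m f hm hf h => hacyc ⟨m, fun j => f j, hm, fun j _ => (f j).2, hf, congrArg _ h⟩
  exact Nat.card_eq_finsetCard S ▸ ⟨fun t ℓ _ => key.1 t ℓ, key.2⟩
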